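/- Let (Ω, μ) be a measure space, T : Ω ≃ Ω a measurable equivalence that preserves μ, R a linear isometric equivalence of ℝ^n, and f : Ω → ℝ^n measurable with f(T ω) = R(f ω) for μ-almost every ω. If a measurable V* : Ω → ℝ^n minimizes the conditional flow matching loss L over all measurable fields, i.e., L(V*) ≤ L(W) for every measurable W : Ω → ℝ^n, then the conjugated field ω ↦ R(V*(T⁻¹ ω)) also satisfies L(ω ↦ R(V*(T⁻¹ ω))) ≤ L(W) for every measurable W : Ω → ℝ^n. -/

import Mathlib

open MeasureTheory

section ConditionalFlowMatching

variable {Ω Ω' E F : Type*} [MeasurableSpace Ω] [MeasurableSpace Ω']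

/-- The conjugated action of the pair `(R, T)` on velocity fields. The two sides of `T` and of `R`
may be different spaces, so that it transports fields on `Ω` to fields on `Ω'`. -/
def conjField (R : E → F) (T : Ω ≃ᵐ Ω') (V : Ω → E) : Ω' → F :=
  fun ω => R (V (T.symm ω))

theorem conjField_apply_apply (R : E → F) (T : Ω ≃ᵐ Ω') (V : Ω → E) (ω : Ω) :
    conjField R T V (T ω) = R (V ω) := by
  rw [conjField, T.symm_apply_apply]

variable [SeminormedAddCommGroup E] [SeminormedAddCommGroup F]

/-- The conditional flow matching loss `L(V)` of a velocity field `V` against the target field `f`.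
It is a Bochner integral, so it takes the value `0` when `‖V - f‖ ^ 2` is not integrable. -/
noncomputable def cfmLoss (μ : Measure Ω) (f V : Ω → E) : ℝ :=
  ∫ ω, ‖V ω - f ω‖ ^ 2 ∂μ

theorem cfmLoss_conjField {μ : Measure Ω} {ν : Measure Ω'} {T : Ω ≃ᵐ Ω'} {R : E → F}
    {f : Ω → E} {g : Ω' → F} (hT : MeasurePreserving T μ ν) (hR : Isometry R)
    (hfg : ∀ᵐ ω ∂μ, g (T ω) = R (f ω)) (V : Ω → E) :
    cfmLoss ν g (conjField R T V) = cfmLoss μ f V := by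
  have norm_sub_eq : ∀ᵐ ω ∂μ, ‖conjField R T V (T ω) - g (T ω)‖ = ‖V ω - f ω‖ := by
    filter_upwards [hfg] with ω hω
    rw [conjField_apply_apply, hω, ← dist_eq_norm, hR.dist_eq, dist_eq_norm]
  calc
    cfmLoss ν g (conjField R T V)
    _ = ∫ ω, ‖conjField R T V (T ω) - g (T ω)‖ ^ 2 ∂μ :=
      (hT.integral_comp' fun ω => ‖conjField R T V ω - g ω‖ ^ 2).symm
    _ = cfmLoss μ f V := integral_congr_ae (norm_sub_eq.mono fun _ h => congrArg (· ^ 2) h)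

theorem cfm_minimizer_invariant_general {μ : Measure Ω} {T : Ω ≃ᵐ Ω} {R : E → E} {f : Ω → E}
    (hT : MeasurePreserving T μ μ) (hR : Isometry R) (hequiv : ∀ᵐ ω ∂μ, f (T ω) = R (f ω))
    (s : Set (Ω → E)) (V : Ω → E) :
    IsMinOn (cfmLoss μ f) s (conjField R T V) ↔ IsMinOn (cfmLoss μ f) s V := by
  simp only [isMinOn_iff, cfmLoss_conjField hT hR hequiv]

end ConditionalFlowMatching

/-- **The set of minimizers of the CFM loss is invariant under the symmetry action.**
If `V⋆` minimizes the conditional flow matching loss over all measurable velocity fields,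
then so does its conjugate `ω ↦ R (V⋆ (T⁻¹ ω))` under a measure-preserving equivalence `T`
and a rotation `R` for which the target field `f` is equivariant. -/
theorem cfm_minimizer_invariant {Ω : Type*} [MeasurableSpace Ω] (μ : Measure Ω) (n : ℕ)
    (T : Ω ≃ᵐ Ω) (hT : μ.map T = μ)
    (R : EuclideanSpace ℝ (Fin n) ≃ₗᵢ[ℝ] EuclideanSpace ℝ (Fin n))
    (f : Ω → EuclideanSpace ℝ (Fin n)) (hf : Measurable f)
    (hequiv : ∀ᵐ ω ∂μ, f (T ω) = R (f ω))
    (Vstar : Ω → EuclideanSpace ℝ (Fin n)) (hVstar : Measurable Vstar)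
    (hmin : ∀ W : Ω → EuclideanSpace ℝ (Fin n), Measurable W →
      ∫ ω, ‖Vstar ω - f ω‖ ^ 2 ∂μ ≤ ∫ ω, ‖W ω - f ω‖ ^ 2 ∂μ) :
    ∀ W : Ω → EuclideanSpace ℝ (Fin n), Measurable W →
      ∫ ω, ‖R (Vstar (T.symm ω)) - f ω‖ ^ 2 ∂μ ≤ ∫ ω, ‖W ω - f ω‖ ^ 2 ∂μ := by
  exact isMinOn_iff.mp <| (cfm_minimizer_invariant_general ⟨T.measurable, hT⟩ R.isometry hequiv
    {W | Measurable W} Vstar).mpr <| isMinOn_iff.mpr hmin
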